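/- arXiv:2412.04817 — 3 statements merged into one kernel-verified Lean document; each statement's English description precedes it below -/
import Mathlib

section
/- Let n ≥ 7 and let α₁, α₂, α₄, α₅ ∈ ℂ with α₅ ≠ 0. Then the algebra A(α₁,α₂,0,α₄,α₅,0) is isomorphic as a non-unital ℂ-algebra to A(0,0,0,0,1,0) if α₁α₅ − α₂α₄ = 0, and to A(1,0,0,0,1,0) if α₁α₅ − α₂α₄ ≠ 0. -/
/-!
Write `a = e₁`, `b = e_{n-2}`, `c = e_n`, `z = e_{n-1}`, and let `A` be the source algebra
`A(α₁,α₂,0,α₄,α₅,0)`. The only products outside the powers of `a` are multiples of `z`, and `z`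
annihilates everything, so a change of basis only has to correct a bilinear form in the
coordinates along `a`, `b`, `c`.

Put `β = (α₁α₅ - α₂α₄) / α₅`. The vector `b' = b - (α₂/α₅) c` satisfies `b'b' = 0`, and a suitable
`a' = a - (α₄/α₅) b + q c` satisfies `c a' = 0` and `b' a' = β z`, while `a' b' = t z` where `t` is
any prescribed scalar (adjust `q`). With `c' = (t/α₅) c`, `z' = t z`, the target relations
`a'b' = z'`, `c'b' = z'`, `b'a' = ε z'` hold as soon as `β = t ε`: take `t = 1`, `ε = 0` when
`β = 0`, and `t = β`, `ε = 1` otherwise. The square of `a'` is `e₂` plus a multiple `r z` of `z`,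
which is absorbed in `e₂' = e₂ + r z`; since `z` annihilates the algebra, all higher powers
`e₃, …, e_{n-3}` are unchanged.

`changeBasis` is the linear map sending the basis of the target to the primed vectors of the
source; `aIso_of_params` shows that its inverse is the isomorphism. The multiplication is
compared coordinatewise, using `amul_low` (coordinates along the powers of `a`), `amul_other`
(coordinates along `b`, `c` vanish) and `amul_z` (the bilinear form along `z`).
-/

/-- The `m`-th standard basis vector of `Fin n → ℂ` (0-based index). -/
noncomputable def bvec (n : ℕ) (m : ℕ) (h : m < n) : Fin n → ℂ :=
  Pi.single (⟨m, h⟩ : Fin n) (1 : ℂ)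

/-- Structure constants of the algebra `A(α₁,…,α₆)` on basis vectors.
Index `i : Fin n` represents the basis vector `e_{i+1}` of the paper. -/
noncomputable def Abasis (n : ℕ) (α : Fin 6 → ℂ) (i j : Fin n) : Fin n → ℂ :=
  if h : i.1 + j.1 + 2 ≤ n - 3 then
    bvec n (i.1 + j.1 + 1) (by omega)
  else if i.1 = 0 ∧ j.1 = n - 3 then
    bvec n (n - 2) (by have := i.2; omega)
  else if i.1 = n - 3 ∧ j.1 = 0 then
    α 0 • bvec n (n - 2) (by have := i.2; omega)
  else if i.1 = n - 3 ∧ j.1 = n - 3 then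
    α 1 • bvec n (n - 2) (by have := i.2; omega)
  else if i.1 = n - 3 ∧ j.1 = n - 1 then
    α 2 • bvec n (n - 2) (by have := i.2; omega)
  else if i.1 = n - 1 ∧ j.1 = 0 then
    α 3 • bvec n (n - 2) (by have := i.2; omega)
  else if i.1 = n - 1 ∧ j.1 = n - 3 then
    α 4 • bvec n (n - 2) (by have := i.2; omega)
  else if i.1 = n - 1 ∧ j.1 = n - 1 then
    α 5 • bvec n (n - 2) (by have := i.2; omega)
  else 0

/-- The bilinear multiplication of the algebra `A(α₁,…,α₆)` on `Fin n → ℂ`. -/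
noncomputable def Amul (n : ℕ) (α : Fin 6 → ℂ) (x y : Fin n → ℂ) : Fin n → ℂ :=
  ∑ i : Fin n, ∑ j : Fin n, (x i * y j) • Abasis n α i j

/-- `A(α) ≅ A(α')` as non-unital `ℂ`-algebras. -/
def AIso (n : ℕ) (α α' : Fin 6 → ℂ) : Prop :=
  ∃ φ : (Fin n → ℂ) ≃ₗ[ℂ] (Fin n → ℂ),
    ∀ x y : Fin n → ℂ, φ (Amul n α x y) = Amul n α' (φ x) (φ y)

lemma amul_apply (n : ℕ) (α : Fin 6 → ℂ) (x y : Fin n → ℂ) (k : Fin n) :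
    Amul n α x y k = ∑ i : Fin n, ∑ j : Fin n, x i * y j * Abasis n α i j k := by
  simp [Amul, Finset.sum_apply]

lemma abasis_low {n : ℕ} (α : Fin 6 → ℂ) (i j k : Fin n) (hk : k.1 < n - 3) :
    Abasis n α i j k = if i.1 + j.1 + 1 = k.1 then 1 else 0 := by
  unfold Abasis bvec
  split_ifs <;> simp [Pi.single_apply, Fin.ext_iff] <;> omega

/-- Coordinates along `e₁, …, e_{n-3}` of a product only involve the coordinates of the factors
along these same vectors. They do not depend on the parameters. -/
lemma amul_low {n : ℕ} (α α' : Fin 6 → ℂ) (x y x' y' : Fin n → ℂ) (k : Fin n)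
    (hk : k.1 < n - 3) (hx : ∀ i : Fin n, i.1 < n - 3 → x i = x' i)
    (hy : ∀ i : Fin n, i.1 < n - 3 → y i = y' i) :
    Amul n α x y k = Amul n α' x' y' k := by
  rw [amul_apply, amul_apply]
  refine Finset.sum_congr rfl fun i _ => Finset.sum_congr rfl fun j _ => ?_
  rw [abasis_low _ _ _ _ hk, abasis_low _ _ _ _ hk]
  split_ifs with h
  · rw [hx i (by omega), hy j (by omega)]
  · simp

lemma amul_other {n : ℕ} (hn : 7 ≤ n) (α : Fin 6 → ℂ) (x y : Fin n → ℂ) (k : Fin n)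
    (hk : k.1 = n - 3 ∨ k.1 = n - 1) :
    Amul n α x y k = 0 := by
  rw [amul_apply]
  refine Finset.sum_eq_zero fun i _ => Finset.sum_eq_zero fun j _ => ?_
  have : Abasis n α i j k = 0 := by
    unfold Abasis bvec
    split_ifs <;> simp [Pi.single_apply, Fin.ext_iff] <;> omega
  rw [this, mul_zero]

lemma amul_zero_coord {n : ℕ} (hn : 7 ≤ n) (α : Fin 6 → ℂ) (x y : Fin n → ℂ) :
    Amul n α x y ⟨0, by omega⟩ = 0 := by
  rw [amul_apply]
  refine Finset.sum_eq_zero fun i _ => Finset.sum_eq_zero fun j _ => ?_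
  rw [abasis_low _ _ _ _ (by simp; omega), if_neg (by simp), mul_zero]

/-- The `e₂`-coordinate of a product. -/
lemma amul_one {n : ℕ} (hn : 7 ≤ n) (α : Fin 6 → ℂ) (x y : Fin n → ℂ) :
    Amul n α x y ⟨1, by omega⟩ = x ⟨0, by omega⟩ * y ⟨0, by omega⟩ := by
  rw [amul_apply, Finset.sum_eq_single ⟨0, by omega⟩, Finset.sum_eq_single ⟨0, by omega⟩]
  · rw [abasis_low _ _ _ _ (by simp; omega)]
    simp
  · intro j _ hj
    rw [abasis_low _ _ _ _ (by simp; omega), if_neg, mul_zero]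
    simpa [Fin.ext_iff] using hj
  · simp
  · intro i _ hi
    refine Finset.sum_eq_zero fun j _ => ?_
    rw [abasis_low _ _ _ _ (by simp; omega), if_neg, mul_zero]
    simp only [ne_eq, Fin.ext_iff] at hi
    simp only
    omega
  · simp

/-- The `e_{n-1}`-coordinate of a product, as a bilinear form in the coordinates along
`e₁`, `e_{n-2}` and `eₙ`. -/
lemma amul_z {n : ℕ} (hn : 7 ≤ n) (a1 a2 a4 a5 : ℂ) (x y : Fin n → ℂ) :
    Amul n ![a1, a2, 0, a4, a5, 0] x y ⟨n - 2, by omega⟩ =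
      x ⟨0, by omega⟩ * y ⟨n - 3, by omega⟩ + a1 * (x ⟨n - 3, by omega⟩ * y ⟨0, by omega⟩)
      + a2 * (x ⟨n - 3, by omega⟩ * y ⟨n - 3, by omega⟩)
      + a4 * (x ⟨n - 1, by omega⟩ * y ⟨0, by omega⟩)
      + a5 * (x ⟨n - 1, by omega⟩ * y ⟨n - 3, by omega⟩) := by
  obtain ⟨A, hA⟩ : ∃ A : Fin n, A = ⟨0, by omega⟩ := ⟨_, rfl⟩
  obtain ⟨B, hB⟩ : ∃ B : Fin n, B = ⟨n - 3, by omega⟩ := ⟨_, rfl⟩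
  obtain ⟨C, hC⟩ : ∃ C : Fin n, C = ⟨n - 1, by omega⟩ := ⟨_, rfl⟩
  rw [amul_apply, ← hA, ← hB, ← hC]
  have key : ∀ i j : Fin n, Abasis n ![a1, a2, 0, a4, a5, 0] i j ⟨n - 2, by omega⟩ =
      (if i = A then 1 else 0) * (if j = B then 1 else 0)
      + a1 * ((if i = B then 1 else 0) * (if j = A then 1 else 0))
      + a2 * ((if i = B then 1 else 0) * (if j = B then 1 else 0))
      + a4 * ((if i = C then 1 else 0) * (if j = A then 1 else 0))
      + a5 * ((if i = C then 1 else 0) * (if j = B then 1 else 0)) := by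
    intro i j
    have hAi : ∀ i : Fin n, i = A ↔ i.1 = 0 := fun i => by rw [hA, Fin.ext_iff]
    have hBi : ∀ i : Fin n, i = B ↔ i.1 = n - 3 := fun i => by rw [hB, Fin.ext_iff]
    have hCi : ∀ i : Fin n, i = C ↔ i.1 = n - 1 := fun i => by rw [hC, Fin.ext_iff]
    simp only [hAi, hBi, hCi]
    have e1 : n - 3 ≠ 0 := by omega
    have e2 : n - 1 ≠ 0 := by omega
    have e3 : n - 1 ≠ n - 3 := by omega
    unfold Abasis bvec
    by_cases h : i.1 + j.1 + 2 ≤ n - 3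
    · have i1 : i.1 ≠ n - 3 := by omega
      have i2 : i.1 ≠ n - 1 := by omega
      have j1 : j.1 ≠ n - 3 := by omega
      have k1 : n - 2 ≠ i.1 + j.1 + 1 := by omega
      simp [h, i1, i2, j1, k1, Fin.ext_iff]
    · rw [dif_neg h]
      have hA0 : i.1 = 0 → i.1 ≠ n - 3 ∧ i.1 ≠ n - 1 := by omega
      have hB0 : i.1 = n - 3 → i.1 ≠ n - 1 := by omega
      have hj0 : j.1 = 0 → j.1 ≠ n - 3 ∧ j.1 ≠ n - 1 := by omega
      have hj1 : j.1 = n - 3 → j.1 ≠ n - 1 := by omega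
      by_cases i0 : i.1 = 0 <;> by_cases i1 : i.1 = n - 3 <;> by_cases i2 : i.1 = n - 1 <;>
        by_cases j0 : j.1 = 0 <;> by_cases j1 : j.1 = n - 3 <;> by_cases j2 : j.1 = n - 1 <;>
        first
        | (exfalso; omega)
        | simp [*, e1.symm, e2.symm, e3.symm]
  have split : ∀ P Q : Fin n, ∑ i : Fin n, ∑ j : Fin n,
      x i * y j * ((if i = P then (1 : ℂ) else 0) * (if j = Q then 1 else 0)) = x P * y Q := by
    intro P Q
    simp
  simp only [key, mul_add, Finset.sum_add_distrib, split, mul_left_comm _ a1, mul_left_comm _ a2,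
    mul_left_comm _ a4, mul_left_comm _ a5, ← Finset.mul_sum]

/-- The linear map of `Fin n → ℂ` with
`e₁ ↦ e₁ + k e_{n-2} + q eₙ`, `e₂ ↦ e₂ + r e_{n-1}`, `e_{n-2} ↦ e_{n-2} + m eₙ`,
`e_{n-1} ↦ t e_{n-1}`, `eₙ ↦ s eₙ`, fixing the other basis vectors. -/
noncomputable def changeBasis (n : ℕ) (hn : 7 ≤ n) (k q m s t r : ℂ) :
    (Fin n → ℂ) →ₗ[ℂ] (Fin n → ℂ) where
  toFun x j :=
    if j.1 = n - 3 then x ⟨n - 3, by omega⟩ + k * x ⟨0, by omega⟩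
    else if j.1 = n - 2 then t * x ⟨n - 2, by omega⟩ + r * x ⟨1, by omega⟩
    else if j.1 = n - 1 then
      q * x ⟨0, by omega⟩ + m * x ⟨n - 3, by omega⟩ + s * x ⟨n - 1, by omega⟩
    else x j
  map_add' x y := by
    ext j
    simp only [Pi.add_apply]
    split_ifs <;> ring
  map_smul' c x := by
    ext j
    simp only [Pi.smul_apply, smul_eq_mul, RingHom.id_apply]
    split_ifs <;> ring

lemma index_cases {n : ℕ} (hn : 7 ≤ n) (j : Fin n) : j.1 < n - 3 ∨ j = ⟨n - 3, by omega⟩ ∨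
    j = ⟨n - 2, by omega⟩ ∨ j = ⟨n - 1, by omega⟩ := by
  simp only [Fin.ext_iff]
  omega

section changeBasis

variable {n : ℕ} (hn : 7 ≤ n) (k q m s t r : ℂ) (x : Fin n → ℂ)

lemma changeBasis_low (j : Fin n) (hj : j.1 < n - 3) :
    changeBasis n hn k q m s t r x j = x j := by
  simp only [changeBasis, LinearMap.coe_mk, AddHom.coe_mk]
  rw [if_neg (by omega), if_neg (by omega), if_neg (by omega)]

lemma changeBasis_b : changeBasis n hn k q m s t r x ⟨n - 3, by omega⟩ =
    x ⟨n - 3, by omega⟩ + k * x ⟨0, by omega⟩ := by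
  simp [changeBasis]

lemma changeBasis_z : changeBasis n hn k q m s t r x ⟨n - 2, by omega⟩ =
    t * x ⟨n - 2, by omega⟩ + r * x ⟨1, by omega⟩ := by
  simp only [changeBasis, LinearMap.coe_mk, AddHom.coe_mk]
  rw [if_neg (by omega)]
  simp

lemma changeBasis_c : changeBasis n hn k q m s t r x ⟨n - 1, by omega⟩ =
    q * x ⟨0, by omega⟩ + m * x ⟨n - 3, by omega⟩ + s * x ⟨n - 1, by omega⟩ := by
  simp only [changeBasis, LinearMap.coe_mk, AddHom.coe_mk]
  rw [if_neg (by omega), if_neg (by omega)]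
  simp

lemma changeBasis_injective (hs : s ≠ 0) (ht : t ≠ 0) :
    Function.Injective (changeBasis n hn k q m s t r) := by
  rw [injective_iff_map_eq_zero]
  intro x hx
  have low : ∀ j : Fin n, j.1 < n - 3 → x j = 0 := fun j hj => by
    rw [← changeBasis_low hn k q m s t r x j hj, hx]; rfl
  have h0 : x ⟨0, by omega⟩ = 0 := low _ (by simp; omega)
  have h1 : x ⟨1, by omega⟩ = 0 := low _ (by simp; omega)
  have hb : x ⟨n - 3, by omega⟩ = 0 := by
    have := changeBasis_b hn k q m s t r x
    rw [hx] at this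
    simpa [h0] using this.symm
  have hz : x ⟨n - 2, by omega⟩ = 0 := by
    have := changeBasis_z hn k q m s t r x
    rw [hx] at this
    simpa [h1, ht] using this
  have hc : x ⟨n - 1, by omega⟩ = 0 := by
    have := changeBasis_c hn k q m s t r x
    rw [hx] at this
    simpa [h0, hb, hs] using this
  ext j
  rcases index_cases hn j with h | rfl | rfl | rfl
  · exact low j h
  · exact hb
  · exact hz
  · exact hc

end changeBasis

/-- If `β = (α₁α₅ - α₂α₄) / α₅` equals `t ε` with `t ≠ 0`, then
`A(α₁,α₂,0,α₄,α₅,0) ≅ A(ε,0,0,0,1,0)`. -/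
lemma aIso_of_params {n : ℕ} (hn : 7 ≤ n) (a1 a2 a4 a5 t ε : ℂ) (ha5 : a5 ≠ 0) (ht : t ≠ 0)
    (h : a1 * a5 - a2 * a4 = a5 * (t * ε)) :
    AIso n ![a1, a2, 0, a4, a5, 0] ![ε, 0, 0, 0, 1, 0] := by
  obtain ⟨k, hk⟩ : ∃ k, k = -a4 / a5 := ⟨_, rfl⟩
  obtain ⟨m, hm⟩ : ∃ m, m = -a2 / a5 := ⟨_, rfl⟩
  obtain ⟨q, hq⟩ : ∃ q, q = (t - 1 - a2 * k) / a5 := ⟨_, rfl⟩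
  obtain ⟨s, hs⟩ : ∃ s, s = t / a5 := ⟨_, rfl⟩
  obtain ⟨r, hr⟩ : ∃ r, r = k + a1 * k + a2 * k ^ 2 + a4 * q + a5 * q * k := ⟨_, rfl⟩
  have hs0 : s ≠ 0 := hs ▸ div_ne_zero ht ha5
  -- The coefficients of the transported bilinear form.
  have ca : a4 + a5 * k = 0 := by rw [hk]; field_simp; ring
  have bb : a2 + a5 * m = 0 := by rw [hm]; field_simp; ring
  have ab : 1 + a2 * k + a5 * q = t := by rw [hq]; field_simp; ring
  have cb : a5 * s = t := by rw [hs]; field_simp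
  have ba : a1 + a2 * k = t * ε := by
    apply mul_left_cancel₀ ha5
    linear_combination h + a2 * ca
  let ψ := LinearEquiv.ofInjectiveEndo (changeBasis n hn k q m s t r)
    (changeBasis_injective hn k q m s t r hs0 ht)
  have hψ : ∀ x, ψ x = changeBasis n hn k q m s t r x := fun x => rfl
  have mul : ∀ x y, ψ (Amul n ![ε, 0, 0, 0, 1, 0] x y) =
      Amul n ![a1, a2, 0, a4, a5, 0] (ψ x) (ψ y) := by
    intro x y
    simp only [hψ]
    ext j
    rcases index_cases hn j with hj | rfl | rfl | rfl
    · rw [changeBasis_low _ _ _ _ _ _ _ _ _ hj]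
      exact amul_low _ _ _ _ _ _ _ hj
        (fun i hi => (changeBasis_low hn k q m s t r x i hi).symm)
        (fun i hi => (changeBasis_low hn k q m s t r y i hi).symm)
    · rw [changeBasis_b, amul_zero_coord hn, amul_other hn _ _ _ _ (Or.inl rfl),
        amul_other hn _ _ _ _ (Or.inl rfl)]
      ring
    · rw [changeBasis_z, amul_z hn, amul_z hn, amul_one hn]
      simp only [changeBasis_b, changeBasis_c]
      rw [changeBasis_low hn _ _ _ _ _ _ x ⟨0, by omega⟩ (by simp; omega),
        changeBasis_low hn _ _ _ _ _ _ y ⟨0, by omega⟩ (by simp; omega)]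
      generalize x ⟨0, _⟩ = x0, x ⟨n - 3, _⟩ = xb, x ⟨n - 1, _⟩ = xc
      generalize y ⟨0, _⟩ = y0, y ⟨n - 3, _⟩ = yb, y ⟨n - 1, _⟩ = yc
      linear_combination x0 * y0 * hr - x0 * yb * ab - xb * y0 * ba - xb * y0 * m * ca
        - xb * yb * bb - xc * y0 * s * ca - xc * yb * cb
    · rw [changeBasis_c, amul_zero_coord hn, amul_other hn _ _ _ ⟨n - 3, _⟩ (Or.inl rfl),
        amul_other hn _ _ _ ⟨n - 1, _⟩ (Or.inr rfl), amul_other hn _ _ _ ⟨n - 1, _⟩ (Or.inr rfl)]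
      ring
  refine ⟨ψ.symm, fun x y => ?_⟩
  rw [LinearEquiv.symm_apply_eq, mul, ψ.apply_symm_apply, ψ.apply_symm_apply]

/-- **Case b.1.** For `α₅ ≠ 0`, the algebra `A(α₁,α₂,0,α₄,α₅,0)` is
isomorphic to `A(0,0,0,0,1,0)` when `α₁α₅ - α₂α₄ = 0`, and to `A(1,0,0,0,1,0)` when
`α₁α₅ - α₂α₄ ≠ 0`. -/
theorem case_b1 (n : ℕ) (hn : 7 ≤ n) (a1 a2 a4 a5 : ℂ) (ha5 : a5 ≠ 0) :
    (a1 * a5 - a2 * a4 = 0 → AIso n ![a1, a2, 0, a4, a5, 0] ![0, 0, 0, 0, 1, 0]) ∧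
    (a1 * a5 - a2 * a4 ≠ 0 → AIso n ![a1, a2, 0, a4, a5, 0] ![1, 0, 0, 0, 1, 0]) := by
  constructor
  · intro h
    exact aIso_of_params hn a1 a2 a4 a5 1 0 ha5 one_ne_zero (by rw [h]; ring)
  · intro h
    exact aIso_of_params hn a1 a2 a4 a5 ((a1 * a5 - a2 * a4) / a5) 1 ha5 (div_ne_zero h ha5)
      (by field_simp)
end

section
/- Let n ≥ 7 and let α₁, α₂, α₃, α₄, α₆ ∈ ℂ with α₆ ≠ 0 and α₃² = α₂α₆. Then the algebra A(α₁,α₂,α₃,α₄,α₃,α₆) is isomorphic as a non-unital ℂ-algebra either to A(1,0,0,1,0,1) or to A(α,0,0,0,0,1) for some α ∈ ℂ. -/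
/-- The coefficient of `e_{n-1}` in the part of the product that involves `e_{n-2}` or `e_n`, as a
bilinear form in the coordinates of the two factors along `e_1`, `e_{n-2}`, `e_n`. -/
def zform (α : Fin 6 → ℂ) (x0 xu xv y0 yu yv : ℂ) : ℂ :=
  x0 * yu + α 0 * (xu * y0) + α 1 * (xu * yu) + α 2 * (xu * yv) + α 3 * (xv * y0)
    + α 4 * (xv * yu) + α 5 * (xv * yv)

lemma Amul_apply (n : ℕ) (α : Fin 6 → ℂ) (x y : Fin n → ℂ) (m : Fin n) :
    Amul n α x y m = ∑ i : Fin n, ∑ j : Fin n, x i * y j * Abasis n α i j m := by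
  simp [Amul, Finset.sum_apply]

lemma Abasis_apply_chain (n : ℕ) (α : Fin 6 → ℂ) (i j m : Fin n) (hm : m.1 < n - 3) :
    Abasis n α i j m = if i.1 + j.1 + 1 = m.1 then 1 else 0 := by
  have hi := i.2
  have hj := j.2
  unfold Abasis bvec
  split_ifs <;> simp [Pi.single_apply, Fin.ext_iff] <;> omega

lemma Abasis_apply_u_v (n : ℕ) (hn : 7 ≤ n) (α : Fin 6 → ℂ) (i j m : Fin n)
    (hm : m.1 = n - 3 ∨ m.1 = n - 1) : Abasis n α i j m = 0 := by
  have hi := i.2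
  have hj := j.2
  unfold Abasis bvec
  split_ifs <;> simp [Pi.single_apply, Fin.ext_iff] <;> omega

lemma Abasis_apply_z (n : ℕ) (hn : 7 ≤ n) (α : Fin 6 → ℂ) (i j : Fin n) :
    Abasis n α i j ⟨n - 2, by omega⟩ =
      zform α (if i = ⟨0, by omega⟩ then 1 else 0) (if i = ⟨n - 3, by omega⟩ then 1 else 0)
        (if i = ⟨n - 1, by omega⟩ then 1 else 0) (if j = ⟨0, by omega⟩ then 1 else 0)
        (if j = ⟨n - 3, by omega⟩ then 1 else 0) (if j = ⟨n - 1, by omega⟩ then 1 else 0) := by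
  obtain ⟨i, hi⟩ := i
  obtain ⟨j, hj⟩ := j
  have e1 : n - 3 ≠ 0 := by omega
  have e2 : n - 1 ≠ 0 := by omega
  have e3 : n - 1 ≠ n - 3 := by omega
  have e4 : n - 3 ≠ n - 1 := by omega
  simp only [Abasis, bvec, zform, Fin.mk.injEq]
  by_cases h : i + j + 2 ≤ n - 3
  · have h1 : i ≠ n - 3 := by omega
    have h2 : i ≠ n - 1 := by omega
    have h3 : j ≠ n - 3 := by omega
    have h4 : n - 2 ≠ i + j + 1 := by omega
    simp [h, h1, h2, h3, h4]
  · rw [dif_neg h]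
    by_cases i0 : i = 0 <;> by_cases iu : i = n - 3 <;> by_cases iv : i = n - 1 <;>
      first
      | omega
      | (by_cases j0 : j = 0 <;> by_cases ju : j = n - 3 <;> by_cases jv : j = n - 1 <;>
          first
          | omega
          | simp [i0, iu, iv, j0, ju, jv, e1, e2, e3, e4, e1.symm, e2.symm])

lemma Amul_apply_z (n : ℕ) (hn : 7 ≤ n) (α : Fin 6 → ℂ) (x y : Fin n → ℂ) :
    Amul n α x y ⟨n - 2, by omega⟩ =
      zform α (x ⟨0, by omega⟩) (x ⟨n - 3, by omega⟩) (x ⟨n - 1, by omega⟩)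
        (y ⟨0, by omega⟩) (y ⟨n - 3, by omega⟩) (y ⟨n - 1, by omega⟩) := by
  have key : ∀ (c : ℂ) (a b : Fin n),
      ∑ i : Fin n, ∑ j : Fin n,
        x i * y j * (c * ((if i = a then 1 else 0) * (if j = b then 1 else 0)))
        = c * (x a * y b) := by
    intro c a b
    rw [Finset.sum_eq_single a, Finset.sum_eq_single b]
    · simp; ring
    · intro j _ hj; simp [hj]
    · simp
    · intro i _ hi; simp [hi]
    · simp
  have key1 := key 1
  simp only [one_mul] at key1
  rw [Amul_apply]
  simp only [Abasis_apply_z n hn, zform, mul_add, Finset.sum_add_distrib, key, key1]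

lemma Amul_apply_zero (n : ℕ) (hn : 7 ≤ n) (α : Fin 6 → ℂ) (x y : Fin n → ℂ) :
    Amul n α x y ⟨0, by omega⟩ = 0 := by
  rw [Amul_apply]
  simp [Abasis_apply_chain n α _ _ ⟨0, by omega⟩ (show 0 < n - 3 by omega)]

lemma Amul_apply_one (n : ℕ) (hn : 7 ≤ n) (α : Fin 6 → ℂ) (x y : Fin n → ℂ) :
    Amul n α x y ⟨1, by omega⟩ = x ⟨0, by omega⟩ * y ⟨0, by omega⟩ := by
  rw [Amul_apply]
  simp only [Abasis_apply_chain n α _ _ ⟨1, by omega⟩ (show 1 < n - 3 by omega)]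
  rw [Finset.sum_eq_single ⟨0, by omega⟩, Finset.sum_eq_single ⟨0, by omega⟩]
  · simp
  · intro j _ hj
    have : j.1 ≠ 0 := fun h => hj (Fin.ext h)
    simp [this]
  · simp
  · intro i _ hi
    have : i.1 ≠ 0 := fun h => hi (Fin.ext h)
    apply Finset.sum_eq_zero
    intro j _
    simp [this]
  · simp

lemma Amul_apply_u_v (n : ℕ) (hn : 7 ≤ n) (α : Fin 6 → ℂ) (x y : Fin n → ℂ) (m : Fin n)
    (hm : m.1 = n - 3 ∨ m.1 = n - 1) : Amul n α x y m = 0 := by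
  rw [Amul_apply]
  simp [Abasis_apply_u_v n hn α _ _ m hm]

/-- The coordinate of a product along `e_1, …, e_{n-3}` depends neither on the parameters nor on
the coordinates of the factors along the other basis vectors. -/
lemma Amul_apply_chain_congr (n : ℕ) (α α' : Fin 6 → ℂ) (x y x' y' : Fin n → ℂ)
    (hx : ∀ i : Fin n, i.1 < n - 3 → x' i = x i) (hy : ∀ i : Fin n, i.1 < n - 3 → y' i = y i)
    (m : Fin n) (hm : m.1 < n - 3) : Amul n α x y m = Amul n α' x' y' m := by
  rw [Amul_apply, Amul_apply]
  refine Finset.sum_congr rfl fun i _ => Finset.sum_congr rfl fun j _ => ?_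
  rw [Abasis_apply_chain n α i j m hm, Abasis_apply_chain n α' i j m hm]
  split_ifs with h
  · rw [hx i (by omega), hy j (by omega)]
  · simp

/-- The change of coordinates that fixes the coordinates along `e_1, …, e_{n-3}`. With
`w = x_v + t x_u`, it sends `x_u` to `k x_u + m w`, `x_v` to `r (w + q x₀)` and the
`e_{n-1}`-coordinate `x_z` to `lam x_z + mu x_{e_2}`. -/
def coordChange (n : ℕ) (hn : 7 ≤ n) (t q k m r lam mu : ℂ) :
    (Fin n → ℂ) →ₗ[ℂ] (Fin n → ℂ) where
  toFun x i :=
    if i.1 = n - 3 then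
      k * x ⟨n - 3, by omega⟩ + m * (x ⟨n - 1, by omega⟩ + t * x ⟨n - 3, by omega⟩)
    else if i.1 = n - 1 then
      r * (x ⟨n - 1, by omega⟩ + t * x ⟨n - 3, by omega⟩ + q * x ⟨0, by omega⟩)
    else if i.1 = n - 2 then lam * x ⟨n - 2, by omega⟩ + mu * x ⟨1, by omega⟩
    else x i
  map_add' x y := by
    ext i
    simp only [Pi.add_apply]
    split_ifs <;> ring
  map_smul' c x := by
    ext i
    simp only [Pi.smul_apply, smul_eq_mul, RingHom.id_apply]
    split_ifs <;> ring

section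
variable (n : ℕ) (hn : 7 ≤ n) (t q k m r lam mu : ℂ) (x : Fin n → ℂ)

lemma coordChange_u : coordChange n hn t q k m r lam mu x ⟨n - 3, by omega⟩ =
    k * x ⟨n - 3, by omega⟩ + m * (x ⟨n - 1, by omega⟩ + t * x ⟨n - 3, by omega⟩) := by
  simp [coordChange]

lemma coordChange_v : coordChange n hn t q k m r lam mu x ⟨n - 1, by omega⟩ =
    r * (x ⟨n - 1, by omega⟩ + t * x ⟨n - 3, by omega⟩ + q * x ⟨0, by omega⟩) := by
  have : n - 1 ≠ n - 3 := by omega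
  simp [coordChange, this]

lemma coordChange_z : coordChange n hn t q k m r lam mu x ⟨n - 2, by omega⟩ =
    lam * x ⟨n - 2, by omega⟩ + mu * x ⟨1, by omega⟩ := by
  have h1 : n - 2 ≠ n - 3 := by omega
  have h2 : n - 2 ≠ n - 1 := by omega
  simp [coordChange, h1, h2]

lemma coordChange_chain (i : Fin n) (hi : i.1 < n - 3) :
    coordChange n hn t q k m r lam mu x i = x i := by
  have h1 : i.1 ≠ n - 3 := by omega
  have h2 : i.1 ≠ n - 1 := by omega
  have h3 : i.1 ≠ n - 2 := by omega
  simp [coordChange, h1, h2, h3]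

end

lemma coordChange_injective (n : ℕ) (hn : 7 ≤ n) (t q k m r lam mu : ℂ)
    (hk : k ≠ 0) (hr : r ≠ 0) (hl : lam ≠ 0) :
    Function.Injective (coordChange n hn t q k m r lam mu) := by
  rw [injective_iff_map_eq_zero]
  intro x hx
  have hc : ∀ i : Fin n, i.1 < n - 3 → x i = 0 := fun i hi => by
    rw [← coordChange_chain n hn t q k m r lam mu x i hi, hx]; rfl
  have hu := coordChange_u n hn t q k m r lam mu x
  have hv := coordChange_v n hn t q k m r lam mu x
  have hz := coordChange_z n hn t q k m r lam mu x
  rw [hx, Pi.zero_apply] at hu hv hz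
  rw [hc ⟨0, by omega⟩ (show 0 < n - 3 by omega), mul_zero, add_zero] at hv
  rw [hc ⟨1, by omega⟩ (show 1 < n - 3 by omega), mul_zero, add_zero] at hz
  have hw := (mul_eq_zero.mp hv.symm).resolve_left hr
  rw [hw, mul_zero, add_zero] at hu
  have hxu := (mul_eq_zero.mp hu.symm).resolve_left hk
  rw [hxu, mul_zero, add_zero] at hw
  have hxz := (mul_eq_zero.mp hz.symm).resolve_left hl
  ext i
  rcases lt_or_ge i.1 (n - 3) with h | h
  · exact hc i h
  · have hi := i.2
    rcases (by omega : i.1 = n - 3 ∨ i.1 = n - 2 ∨ i.1 = n - 1) with h | h | h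
    · rw [show i = ⟨n - 3, by omega⟩ from Fin.ext h]; exact hxu
    · rw [show i = ⟨n - 2, by omega⟩ from Fin.ext h]; exact hxz
    · rw [show i = ⟨n - 1, by omega⟩ from Fin.ext h]; exact hw

/-- Reduction of the isomorphism problem to bilinear forms: a change of coordinates is
multiplicative as soon as it carries the target form to `lam` times the source form, up to the
multiple `mu` of `x₀ * y₀`, the coordinate along `e_2` of the product. -/
lemma AIso_of_zform (n : ℕ) (hn : 7 ≤ n) (α α' : Fin 6 → ℂ) (t q k m r lam mu : ℂ)
    (hk : k ≠ 0) (hr : r ≠ 0) (hl : lam ≠ 0)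
    (h : ∀ x0 xu xv y0 yu yv : ℂ,
      lam * zform α x0 xu xv y0 yu yv + mu * (x0 * y0) =
        zform α' x0 (k * xu + m * (xv + t * xu)) (r * (xv + t * xu + q * x0))
          y0 (k * yu + m * (yv + t * yu)) (r * (yv + t * yu + q * y0))) :
    AIso n α α' := by
  refine ⟨LinearEquiv.ofInjectiveEndo _
    (coordChange_injective n hn t q k m r lam mu hk hr hl), fun x y => ?_⟩
  simp only [LinearEquiv.coe_ofInjectiveEndo]
  have c0 : ∀ x, coordChange n hn t q k m r lam mu x ⟨0, by omega⟩ = x ⟨0, by omega⟩ :=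
    fun x => coordChange_chain n hn t q k m r lam mu x _ (show 0 < n - 3 by omega)
  ext i
  rcases lt_or_ge i.1 (n - 3) with hi | hi
  · rw [coordChange_chain _ _ _ _ _ _ _ _ _ _ i hi]
    exact Amul_apply_chain_congr n α α' _ _ _ _ (coordChange_chain n hn t q k m r lam mu x)
      (coordChange_chain n hn t q k m r lam mu y) i hi
  · have hin := i.2
    rcases (by omega : i.1 = n - 3 ∨ i.1 = n - 2 ∨ i.1 = n - 1) with h' | h' | h'
    · rw [Amul_apply_u_v n hn α' _ _ i (Or.inl h'), show i = ⟨n - 3, by omega⟩ from Fin.ext h',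
        coordChange_u, Amul_apply_u_v n hn α _ _ ⟨n - 3, _⟩ (Or.inl rfl),
        Amul_apply_u_v n hn α _ _ ⟨n - 1, _⟩ (Or.inr rfl)]
      ring
    · rw [show i = ⟨n - 2, by omega⟩ from Fin.ext h', coordChange_z, Amul_apply_z n hn,
        Amul_apply_z n hn, Amul_apply_one n hn, coordChange_u, coordChange_u, coordChange_v,
        coordChange_v, c0, c0]
      exact h _ _ _ _ _ _
    · rw [Amul_apply_u_v n hn α' _ _ i (Or.inr h'), show i = ⟨n - 1, by omega⟩ from Fin.ext h',
        coordChange_v, Amul_apply_u_v n hn α _ _ ⟨n - 3, _⟩ (Or.inl rfl),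
        Amul_apply_u_v n hn α _ _ ⟨n - 1, _⟩ (Or.inr rfl),
        Amul_apply_zero n hn]
      ring

/-- The mixed term in `w(x) y₀` can be removed as soon as `(1 - b) α₆ q = α₄` is solvable
for `q`, where `b = α₁ - α₄ t`. -/
lemma AIso_of_shear (n : ℕ) (hn : 7 ≤ n) (a1 a2 a3 a4 a6 t q : ℂ) (ha6 : a6 ≠ 0)
    (h3 : a3 = t * a6) (h2 : a2 = t ^ 2 * a6) (hq : (1 - (a1 - a4 * t)) * (a6 * q) = a4) :
    AIso n ![a1, a2, a3, a4, a3, a6] ![a1 - a4 * t, 0, 0, 0, 0, 1] := by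
  obtain ⟨r, hr⟩ := IsAlgClosed.exists_pow_nat_eq a6 (n := 2) (by norm_num)
  have hr0 : r ≠ 0 := by
    rintro rfl
    exact ha6 (by rw [← hr]; norm_num)
  refine AIso_of_zform n hn _ _ t q 1 (-(a6 * q)) r 1 (a6 * q ^ 2) one_ne_zero hr0 one_ne_zero ?_
  intro x0 xu xv y0 yu yv
  simp [zform]
  subst h3 h2
  linear_combination (-(xv + t * xu + q * x0) * (yv + t * yu + q * y0)) * hr
    - (xv + t * xu) * y0 * hq

/-- **Case a.1.2.** For `α₆ ≠ 0` and `α₃² = α₂α₆`, the algebra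
`A(α₁,α₂,α₃,α₄,α₃,α₆)` is isomorphic either to `A(1,0,0,1,0,1)` or to
`A(α,0,0,0,0,1)` for some `α ∈ ℂ`. -/
theorem case_a12 (n : ℕ) (hn : 7 ≤ n) (a1 a2 a3 a4 a6 : ℂ) (ha6 : a6 ≠ 0)
    (hsq : a3 ^ 2 = a2 * a6) :
    AIso n ![a1, a2, a3, a4, a3, a6] ![1, 0, 0, 1, 0, 1] ∨
    ∃ a : ℂ, AIso n ![a1, a2, a3, a4, a3, a6] ![a, 0, 0, 0, 0, 1] := by
  obtain ⟨t, h3⟩ : ∃ t, a3 = t * a6 := ⟨a3 / a6, by field_simp⟩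
  have h2 : a2 = t ^ 2 * a6 := by
    apply mul_right_cancel₀ ha6
    rw [← hsq, h3]
    ring
  by_cases hb : a1 - a4 * t = 1
  · by_cases h4 : a4 = 0
    · exact Or.inr ⟨_, AIso_of_shear n hn a1 a2 a3 a4 a6 t 0 ha6 h3 h2 (by simp [h4])⟩
    · left
      -- Matching `x₀ y_u`, `w(x) y₀` and `w(x) w(y)` gives `k = lam`, `r = lam α₄`, `r² = lam α₆`.
      have hl : a6 / a4 ^ 2 ≠ 0 := div_ne_zero ha6 (pow_ne_zero 2 h4)
      refine AIso_of_zform n hn _ _ t 0 (a6 / a4 ^ 2) 0 (a6 / a4) (a6 / a4 ^ 2) 0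
        hl (div_ne_zero ha6 h4) hl ?_
      intro x0 xu xv y0 yu yv
      have h1 : a1 = 1 + a4 * t := by linear_combination hb
      simp [zform]
      subst h3 h2 h1
      field_simp
      ring
  · right
    have hb' : 1 - (a1 - a4 * t) ≠ 0 := fun h => hb (by linear_combination -h)
    refine ⟨_, AIso_of_shear n hn a1 a2 a3 a4 a6 t (a4 / (a6 * (1 - (a1 - a4 * t)))) ha6 h3 h2 ?_⟩
    field_simp
end

section
/- Let n ≥ 7. The four families of algebras B(0,1,0,0), B(0,1,1,0), B(1,0,0,1) and B(β,1,0,1) (β ∈ ℂ) are pairwise non-isomorphic as non-unital ℂ-algebras: two algebras from different items of this list are never isomorphic, and B(β,1,0,1) ≅ B(β′,1,0,1) implies β = β′. -/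
/-- Structure constants of the algebra `B(β₁,…,β₄)` on basis vectors.
Index `i : Fin n` represents the basis vector `e_{i+1}` of the paper. -/
noncomputable def Bbasis (n : ℕ) (β : Fin 4 → ℂ) (i j : Fin n) : Fin n → ℂ :=
  if h : i.1 + j.1 + 2 ≤ n - 3 then
    bvec n (i.1 + j.1 + 1) (by omega)
  else if i.1 = 0 ∧ j.1 = n - 3 then
    bvec n (n - 2) (by have := i.2; omega)
  else if i.1 = n - 3 ∧ j.1 = 0 then
    β 0 • bvec n (n - 2) (by have := i.2; omega) + β 1 • bvec n (n - 1) (by have := i.2; omega)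
  else if i.1 = n - 3 ∧ j.1 = n - 3 then
    β 2 • bvec n (n - 2) (by have := i.2; omega) + β 3 • bvec n (n - 1) (by have := i.2; omega)
  else 0

/-- The bilinear multiplication of the algebra `B(β₁,…,β₄)` on `Fin n → ℂ`. -/
noncomputable def Bmul (n : ℕ) (β : Fin 4 → ℂ) (x y : Fin n → ℂ) : Fin n → ℂ :=
  ∑ i : Fin n, ∑ j : Fin n, (x i * y j) • Bbasis n β i j

/-- `B(β) ≅ B(β')` as non-unital `ℂ`-algebras. -/
def BIso (n : ℕ) (β β' : Fin 4 → ℂ) : Prop :=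
  ∃ φ : (Fin n → ℂ) ≃ₗ[ℂ] (Fin n → ℂ),
    ∀ x y : Fin n → ℂ, φ (Bmul n β x y) = Bmul n β' (φ x) (φ y)

/-- The parameter tuples in the paper's list for the family `B` (Theorem 3.6). -/
def BClassList : Set (Fin 4 → ℂ) :=
  {p | p = ![0, 1, 0, 0] ∨ p = ![0, 1, 1, 0] ∨ p = ![1, 0, 0, 1] ∨ ∃ b : ℂ, p = ![b, 1, 0, 1]}

/-! ### Coordinates of products -/

lemma Bmul_apply (n : ℕ) (β : Fin 4 → ℂ) (x y : Fin n → ℂ) (m : Fin n) :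
    Bmul n β x y m = ∑ i, ∑ j, (x i * y j) * Bbasis n β i j m := by
  simp [Bmul, Finset.sum_apply]

lemma Bmul_single (n : ℕ) (β : Fin 4 → ℂ) (i j : Fin n) :
    Bmul n β (Pi.single i 1) (Pi.single j 1) = Bbasis n β i j := by
  simp [Bmul, Pi.single_apply]

lemma Bmul_coord_zero (n : ℕ) (hn : 7 ≤ n) (β : Fin 4 → ℂ) (x y : Fin n → ℂ) :
    Bmul n β x y ⟨0, by omega⟩ = 0 := by
  have key : ∀ i j : Fin n, Bbasis n β i j ⟨0, by omega⟩ = 0 := by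
    intro i j
    have h1 : 0 ≠ n - 2 := by omega
    have h2 : 0 ≠ n - 1 := by omega
    unfold Bbasis
    split_ifs <;> simp [bvec, Pi.single_apply, Fin.ext_iff, h1, h2]
  simp [Bmul_apply, key]

lemma Bmul_coord_f (n : ℕ) (hn : 7 ≤ n) (β : Fin 4 → ℂ) (x y : Fin n → ℂ) :
    Bmul n β x y ⟨n - 3, by omega⟩ = 0 := by
  have key : ∀ i j : Fin n, Bbasis n β i j ⟨n - 3, by omega⟩ = 0 := by
    intro i j
    have h1 : n - 3 ≠ n - 2 := by omega
    have h2 : n - 3 ≠ n - 1 := by omega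
    unfold Bbasis
    split_ifs <;> simp [bvec, Pi.single_apply, Fin.ext_iff, h1, h2]
    omega
  simp [Bmul_apply, key]

lemma Bmul_coord_one (n : ℕ) (hn : 7 ≤ n) (β : Fin 4 → ℂ) (x y : Fin n → ℂ) :
    Bmul n β x y ⟨1, by omega⟩ = x ⟨0, by omega⟩ * y ⟨0, by omega⟩ := by
  have key : ∀ i j : Fin n, Bbasis n β i j ⟨1, by omega⟩ =
      if i = ⟨0, by omega⟩ then (if j = ⟨0, by omega⟩ then 1 else 0) else 0 := by
    intro i j
    have h1 : 1 ≠ n - 2 := by omega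
    have h2 : 1 ≠ n - 1 := by omega
    unfold Bbasis
    split_ifs <;> simp_all [bvec, Fin.ext_iff] <;> omega
  simp [Bmul_apply, key]

lemma Bmul_coord_two (n : ℕ) (hn : 7 ≤ n) (β : Fin 4 → ℂ) (x y : Fin n → ℂ) :
    Bmul n β x y ⟨2, by omega⟩ =
      x ⟨0, by omega⟩ * y ⟨1, by omega⟩ + x ⟨1, by omega⟩ * y ⟨0, by omega⟩ := by
  have key : ∀ i j : Fin n, Bbasis n β i j ⟨2, by omega⟩ =
      (if i = ⟨0, by omega⟩ then (if j = ⟨1, by omega⟩ then 1 else 0) else 0) +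
      (if i = ⟨1, by omega⟩ then (if j = ⟨0, by omega⟩ then 1 else 0) else 0) := by
    intro i j
    have h1 : 2 ≠ n - 2 := by omega
    have h2 : 2 ≠ n - 1 := by omega
    unfold Bbasis
    split_ifs <;> simp_all [bvec, Pi.single_apply, Fin.ext_iff] <;> omega
  simp [Bmul_apply, key, mul_add, Finset.sum_add_distrib]

lemma Bmul_coord_g (n : ℕ) (hn : 7 ≤ n) (β : Fin 4 → ℂ) (x y : Fin n → ℂ) :
    Bmul n β x y ⟨n - 2, by omega⟩ =
      x ⟨0, by omega⟩ * y ⟨n - 3, by omega⟩ + x ⟨n - 3, by omega⟩ * y ⟨0, by omega⟩ * β 0 +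
        x ⟨n - 3, by omega⟩ * y ⟨n - 3, by omega⟩ * β 2 := by
  have key : ∀ i j : Fin n, Bbasis n β i j ⟨n - 2, by omega⟩ =
      (if i = ⟨0, by omega⟩ then (if j = ⟨n - 3, by omega⟩ then 1 else 0) else 0) +
      (if i = ⟨n - 3, by omega⟩ then (if j = ⟨0, by omega⟩ then β 0 else 0) else 0) +
      (if i = ⟨n - 3, by omega⟩ then (if j = ⟨n - 3, by omega⟩ then β 2 else 0) else 0) := by
    intro i j
    have h1 : n - 2 ≠ n - 1 := by omega
    have h2 : n - 3 ≠ 0 := by omega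
    unfold Bbasis
    split_ifs <;> simp_all [bvec, Pi.single_apply, Fin.ext_iff] <;> omega
  simp [Bmul_apply, key, mul_add, Finset.sum_add_distrib]

lemma Bmul_coord_h (n : ℕ) (hn : 7 ≤ n) (β : Fin 4 → ℂ) (x y : Fin n → ℂ) :
    Bmul n β x y ⟨n - 1, by omega⟩ =
      x ⟨n - 3, by omega⟩ * y ⟨0, by omega⟩ * β 1 +
        x ⟨n - 3, by omega⟩ * y ⟨n - 3, by omega⟩ * β 3 := by
  have key : ∀ i j : Fin n, Bbasis n β i j ⟨n - 1, by omega⟩ =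
      (if i = ⟨n - 3, by omega⟩ then (if j = ⟨0, by omega⟩ then β 1 else 0) else 0) +
      (if i = ⟨n - 3, by omega⟩ then (if j = ⟨n - 3, by omega⟩ then β 3 else 0) else 0) := by
    intro i j
    have h1 : n - 1 ≠ n - 2 := by omega
    have h2 : n - 3 ≠ 0 := by omega
    unfold Bbasis
    split_ifs <;> simp_all [bvec, Pi.single_apply, Fin.ext_iff] <;> omega
  simp [Bmul_apply, key, mul_add, Finset.sum_add_distrib]

lemma Bbasis_zero_f (n : ℕ) (hn : 7 ≤ n) (β : Fin 4 → ℂ) :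
    Bbasis n β ⟨0, by omega⟩ ⟨n - 3, by omega⟩ = Pi.single ⟨n - 2, by omega⟩ 1 := by
  unfold Bbasis
  rw [dif_neg (by simp), if_pos (by simp)]
  rfl

lemma Bbasis_f_zero (n : ℕ) (hn : 7 ≤ n) (β : Fin 4 → ℂ) :
    Bbasis n β ⟨n - 3, by omega⟩ ⟨0, by omega⟩ =
      β 0 • Pi.single ⟨n - 2, by omega⟩ 1 + β 1 • Pi.single ⟨n - 1, by omega⟩ 1 := by
  unfold Bbasis
  rw [dif_neg (by simp), if_neg (by simp; omega), if_pos (by simp)]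
  rfl

lemma Bbasis_f_f (n : ℕ) (hn : 7 ≤ n) (β : Fin 4 → ℂ) :
    Bbasis n β ⟨n - 3, by omega⟩ ⟨n - 3, by omega⟩ =
      β 2 • Pi.single ⟨n - 2, by omega⟩ 1 + β 3 • Pi.single ⟨n - 1, by omega⟩ 1 := by
  unfold Bbasis
  rw [dif_neg (by simp; omega), if_neg (by simp; omega), if_neg (by simp; omega),
    if_pos (by simp)]
  rfl

/-! ### Isomorphisms modulo the square -/

/-- If `β₂` or `β₄` is nonzero, then `e₁` and `e_{n-2}` span `B(β)` modulo its square: a linear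
functional vanishing on all products is determined by its values on these two vectors. -/
lemma linear_eq_of_vanish (n : ℕ) (hn : 7 ≤ n) (p : Fin 4 → ℂ) (hp : p 1 ≠ 0 ∨ p 3 ≠ 0)
    (L : (Fin n → ℂ) →ₗ[ℂ] ℂ) (hL : ∀ x y, L (Bmul n p x y) = 0) (x : Fin n → ℂ) :
    L x = x ⟨0, by omega⟩ * L (Pi.single ⟨0, by omega⟩ 1) +
      x ⟨n - 3, by omega⟩ * L (Pi.single ⟨n - 3, by omega⟩ 1) := by
  have hB : ∀ i j, L (Bbasis n p i j) = 0 := fun i j => by rw [← Bmul_single]; exact hL _ _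
  have hg : L (Pi.single ⟨n - 2, by omega⟩ 1) = 0 := by
    rw [← Bbasis_zero_f n hn p]; exact hB _ _
  have hh : L (Pi.single ⟨n - 1, by omega⟩ 1) = 0 := by
    have h1 := hB ⟨n - 3, by omega⟩ ⟨0, by omega⟩
    have h2 := hB ⟨n - 3, by omega⟩ ⟨n - 3, by omega⟩
    rw [Bbasis_f_zero n hn, map_add, map_smul, map_smul, hg] at h1
    rw [Bbasis_f_f n hn, map_add, map_smul, map_smul, hg] at h2
    simp only [smul_eq_mul, mul_zero, zero_add, mul_eq_zero] at h1 h2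
    rcases hp with hp | hp
    · exact h1.resolve_left hp
    · exact h2.resolve_left hp
  have key : ∀ i : Fin n, i ≠ ⟨0, by omega⟩ → i ≠ ⟨n - 3, by omega⟩ →
      L (Pi.single i 1) = 0 := by
    rintro ⟨i, hi⟩ h0 hf
    simp only [ne_eq, Fin.mk.injEq] at h0 hf
    by_cases h2 : i = n - 2
    · subst h2; exact hg
    by_cases h1 : i = n - 1
    · subst h1; exact hh
    -- The remaining basis vectors are the products `e_{i-1} e₁`.
    have := hB ⟨i - 1, by omega⟩ ⟨0, by omega⟩
    unfold Bbasis at this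
    rw [dif_pos (by simp; omega)] at this
    have e : i - 1 + 0 + 1 = i := by omega
    simpa only [bvec, e] using this
  have hne : (⟨0, by omega⟩ : Fin n) ≠ ⟨n - 3, by omega⟩ := by
    simp only [ne_eq, Fin.mk.injEq]; omega
  have hsum : L x = ∑ i, x i * L (Pi.single i 1) := by
    conv_lhs => rw [pi_eq_sum_univ' x]
    simp [map_sum]
  rw [hsum, ← Finset.sum_subset (Finset.subset_univ {⟨0, by omega⟩, ⟨n - 3, by omega⟩}),
    Finset.sum_pair hne]
  intro i _ hi
  simp only [Finset.mem_insert, Finset.mem_singleton, not_or] at hi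
  rw [key i hi.1 hi.2, mul_zero]

/-- The constraints that an isomorphism `φ : B(p) ≅ B(q)` puts on the parameters. Here
`φ e₁ ≡ a e₁ + c e_{n-2}` and `φ e_{n-2} ≡ d e_{n-2}` modulo the square, and `(g₁, g₂)`, `(h₁, h₂)`
are the last two coordinates of `φ e_{n-1}`, `φ e_n`. -/
lemma exists_coeffs_of_BIso (n : ℕ) (hn : 7 ≤ n) (p q : Fin 4 → ℂ) (hp : p 1 ≠ 0 ∨ p 3 ≠ 0)
    (h : BIso n p q) :
    ∃ a c d g₁ g₂ h₁ h₂ : ℂ, a ≠ 0 ∧ d ≠ 0 ∧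
      g₁ = a * d + c * d * q 2 ∧
      g₂ = c * d * q 3 ∧
      p 0 * g₁ + p 1 * h₁ = d * a * q 0 + d * c * q 2 ∧
      p 0 * g₂ + p 1 * h₂ = d * a * q 1 + d * c * q 3 ∧
      p 2 * g₁ + p 3 * h₁ = d * d * q 2 ∧
      p 2 * g₂ + p 3 * h₂ = d * d * q 3 := by
  obtain ⟨φ, hφ⟩ := h
  set z : Fin n := ⟨0, by omega⟩ with hz
  set f : Fin n := ⟨n - 3, by omega⟩ with hf
  set g : Fin n := ⟨n - 2, by omega⟩ with hg
  set w : Fin n := ⟨n - 1, by omega⟩ with hw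
  set E : Fin n → ℂ := Pi.single z 1 with hE
  set F : Fin n → ℂ := Pi.single f 1 with hF
  have hzf : z ≠ f := by simp only [hz, hf, ne_eq, Fin.mk.injEq]; omega
  have e1 : Bmul n p E F = Pi.single g 1 := by rw [hE, hF, Bmul_single, Bbasis_zero_f n hn]
  have e2 : Bmul n p F E = p 0 • Pi.single g 1 + p 1 • Pi.single w 1 := by
    rw [hE, hF, Bmul_single, Bbasis_f_zero n hn]
  have e3 : Bmul n p F F = p 2 • Pi.single g 1 + p 3 • Pi.single w 1 := by
    rw [hF, Bmul_single, Bbasis_f_f n hn]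
  have cube : Bmul n p (Bmul n p F F) F = 0 := by
    rw [e3]
    have hB : ∀ i : Fin n, n - 3 < i.1 → ∀ j, Bbasis n p i j = 0 := by
      intro i hi j
      unfold Bbasis
      rw [dif_neg (by omega), if_neg (by omega), if_neg (by omega), if_neg (by omega)]
    unfold Bmul
    refine Finset.sum_eq_zero fun i _ => Finset.sum_eq_zero fun j _ => ?_
    by_cases hi : n - 3 < i.1
    · rw [hB i hi j, smul_zero]
    · have h1 : i ≠ g := by rintro rfl; simp only [hg] at hi; omega
      have h2 : i ≠ w := by rintro rfl; simp only [hw] at hi; omega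
      simp [h1, h2]
  have hb : φ F z = 0 := by
    have := congrFun (congrArg φ cube) ⟨2, by omega⟩
    rw [hφ, hφ, Bmul_coord_two n hn, Bmul_coord_zero n hn, Bmul_coord_one n hn] at this
    simpa using this
  have Lz := linear_eq_of_vanish n hn p hp ((LinearMap.proj z).comp φ.toLinearMap)
    (fun x y => by simpa [hφ] using Bmul_coord_zero n hn q (φ x) (φ y))
  have Lf := linear_eq_of_vanish n hn p hp ((LinearMap.proj f).comp φ.toLinearMap)
    (fun x y => by simpa [hφ] using Bmul_coord_f n hn q (φ x) (φ y))
  simp only [LinearMap.comp_apply, LinearMap.proj_apply, LinearEquiv.coe_coe] at Lz Lf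
  change ∀ x : Fin n → ℂ, φ x z = x z * φ E z + x f * φ F z at Lz
  change ∀ x : Fin n → ℂ, φ x f = x z * φ E f + x f * φ F f at Lf
  have ha : φ E z ≠ 0 := by
    intro h0
    have := Lz (φ.symm E)
    rw [h0, hb, φ.apply_symm_apply] at this
    simp [hE] at this
  have hd : φ F f ≠ 0 := by
    intro h0
    have h1 := Lz (φ.symm F)
    have h2 := Lf (φ.symm F)
    rw [hb, φ.apply_symm_apply] at h1
    rw [h0, φ.apply_symm_apply] at h2
    have h3 : φ.symm F z = 0 := by
      simpa [hF, hzf, ha] using h1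
    rw [h3] at h2
    simp [hF] at h2
  have g1 := congrFun (hφ E F) g
  have g2 := congrFun (hφ E F) w
  have g3 := congrFun (hφ F E) g
  have g4 := congrFun (hφ F E) w
  have g5 := congrFun (hφ F F) g
  have g6 := congrFun (hφ F F) w
  rw [Bmul_coord_g n hn] at g1 g3 g5
  rw [Bmul_coord_h n hn] at g2 g4 g6
  rw [e1] at g1 g2
  rw [e2] at g3 g4
  rw [e3] at g5 g6
  simp only [← hz, ← hf, hb, map_add, map_smul, Pi.add_apply, Pi.smul_apply, smul_eq_mul,
    zero_mul, mul_zero, zero_add, add_zero] at g1 g2 g3 g4 g5 g6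
  exact ⟨φ E z, φ E f, φ F f, φ (Pi.single g 1) g, φ (Pi.single g 1) w,
    φ (Pi.single w 1) g, φ (Pi.single w 1) w, ha, hd, g1, g2, g3, g4, g5, g6⟩

/-- **Theorem 3.6, uniqueness part.** The algebras `B(0,1,0,0)`,
`B(0,1,1,0)`, `B(1,0,0,1)` and `B(β,1,0,1)` (`β ∈ ℂ`) are pairwise non-isomorphic, and
`B(β,1,0,1) ≅ B(β',1,0,1)` implies `β = β'`. -/
theorem B_family_classification_pairwise_nonisomorphic (n : ℕ) (hn : 7 ≤ n) :
    ∀ p ∈ BClassList, ∀ q ∈ BClassList, BIso n p q → p = q := by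
  intro p hp q hq h
  have hp' : p 1 ≠ 0 ∨ p 3 ≠ 0 := by
    rcases hp with rfl | rfl | rfl | ⟨b, rfl⟩ <;> simp
  obtain ⟨a, c, d, g₁, g₂, h₁, h₂, ha, hd, k1, k2, k3, k4, k5, k6⟩ :=
    exists_coeffs_of_BIso n hn p q hp' h
  have had : d * a ≠ 0 := mul_ne_zero hd ha
  have hdd : d * d ≠ 0 := mul_ne_zero hd hd
  rcases hp with rfl | rfl | rfl | ⟨b, rfl⟩ <;>
    rcases hq with rfl | rfl | rfl | ⟨b', rfl⟩ <;>
    simp only [Matrix.cons_val] at k1 k2 k3 k4 k5 k6 <;>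
    first
    | rfl
    | (exfalso; grind)
    | (have : b = b' := by grind
       rw [this])
end
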